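/- arXiv:2304.13695 — 3 statements merged into one kernel-verified Lean document; each statement's English description precedes it below -/
import Mathlib

section
/- Let G be a finite simple graph, σ a linear order on V(G), and γ ≥ 1 an integer. Let 𝒱 be a collection of subsets of V(G) such that every V ∈ 𝒱 satisfies |V| ≤ γ and G[V] is connected, and let S be a hitting set of 𝒱. Let δ ≥ 1 be an integer and let X be a nonempty subset of V(G) that is the core of an r-sunflower in 𝒱 for some r ≥ δ. Then either S ∩ X ≠ ∅, or the σ-maximum vertex v* of X satisfies |{u ∈ S : v* ∈ WR_γ(G,σ,u)}| ≥ δ − wcol_γ(G,σ). -/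
/-- `WR_r(G, σ, v)`: the set of vertices `u` reachable from `v` by a walk of
length at most `r` on which every vertex is `≤ u` in the order `σ`. -/
def WR {α : Type} (G : SimpleGraph α) (σ : LinearOrder α) (r : ℕ) (v : α) : Set α :=
  {u | ∃ p : G.Walk v u, p.length ≤ r ∧ ∀ w ∈ p.support, σ.le w u}

/-- `wcol_r(G, σ)`: the weak `r`-coloring number of `G` under the order `σ`. -/
noncomputable def wcol {α : Type} [Fintype α] (G : SimpleGraph α)
    (σ : LinearOrder α) (r : ℕ) : ℕ :=
  Finset.univ.sup fun v => (WR G σ r v).ncard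

/-- `X` is the core of an `r`-sunflower in `𝒰`. -/
def IsSunflowerWithCore {α : Type} [DecidableEq α] (𝒰 : Set (Finset α)) (r : ℕ)
    (X : Finset α) : Prop :=
  ∃ 𝒮 : Finset (Finset α), ↑𝒮 ⊆ 𝒰 ∧ 𝒮.card = r ∧
    ∀ A ∈ 𝒮, ∀ B ∈ 𝒮, A ≠ B → A ∩ B = X

/-!
Suppose `S` misses the core, and split the sunflower according to whether the maximum `v` of the
core is also the maximum of the set. A set of the first kind contains a vertex of `S` outside the
core, and `v` is weakly reachable from it. The maximum of a set of the second kind lies outside the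
core and is weakly reachable from `v`. Since the petals are pairwise disjoint, there are at most
`|{u ∈ S : v ∈ WR u}|` sets of the first kind and at most `|WR v|` of the second.
-/

section Sunflower

variable {ι α : Type*}

theorem encard_le_encard_of_pairwiseDisjoint {s : Set ι} {f : ι → Set α} {t : Set α}
    (hs : s.PairwiseDisjoint f) (ht : ∀ i ∈ s, (f i ∩ t).Nonempty) : s.encard ≤ t.encard := by
  choose g hg using ht
  refine Function.Embedding.encard_le ⟨fun i ↦ ⟨g i i.2, (hg i i.2).2⟩, fun i j hij ↦ ?_⟩
  have hgij : g i i.2 = g j j.2 := congrArg Subtype.val hij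
  exact Subtype.ext <| hs.elim_set i.2 j.2 _ (hg i i.2).1 (hgij ▸ (hg j j.2).1)

variable [DecidableEq α]

/-- A (possibly infinite) sunflower with core `X`, as in `IsSunflowerWithCore` but without fixing
the number of sets. With at most one set there is no constraint on `X`. -/
def IsSunflower (𝒮 : Set (Finset α)) (X : Finset α) : Prop :=
  𝒮.Pairwise fun A B ↦ A ∩ B = X

namespace IsSunflower

variable {𝒮 𝒯 : Set (Finset α)} {X A : Finset α}

theorem mono (h : IsSunflower 𝒮 X) (h𝒯 : 𝒯 ⊆ 𝒮) : IsSunflower 𝒯 X :=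
  Set.Pairwise.mono h𝒯 h

theorem core_subset (h : IsSunflower 𝒮 X) (h𝒮 : 𝒮.Nontrivial) (hA : A ∈ 𝒮) : X ⊆ A := by
  obtain ⟨B, hB, hBA⟩ := h𝒮.exists_ne A
  exact h hA hB hBA.symm ▸ Finset.inter_subset_left

theorem pairwiseDisjoint_petals (h : IsSunflower 𝒮 X) :
    𝒮.PairwiseDisjoint fun A ↦ (A \ X : Set α) := by
  intro A hA B hB hAB
  refine Set.disjoint_left.2 fun x hxA hxB ↦ hxA.2 ?_
  exact h hA hB hAB ▸ Finset.mem_inter.2 ⟨hxA.1, hxB.1⟩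

theorem encard_le_encard (h : IsSunflower 𝒮 X) {T : Set α}
    (hT : ∀ A ∈ 𝒮, ∃ x ∈ A, x ∉ X ∧ x ∈ T) : 𝒮.encard ≤ T.encard :=
  encard_le_encard_of_pairwiseDisjoint h.pairwiseDisjoint_petals fun A hA ↦
    let ⟨x, hxA, hxX, hxT⟩ := hT A hA
    ⟨x, ⟨hxA, hxX⟩, hxT⟩

end IsSunflower

end Sunflower

section WeakReachability

variable {α : Type} {G : SimpleGraph α} {σ : LinearOrder α} {r : ℕ}

theorem self_mem_WR (v : α) : v ∈ WR G σ r v :=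
  ⟨.nil, by simp⟩

theorem encard_WR_le_wcol [Fintype α] (v : α) : (WR G σ r v).encard ≤ wcol G σ r := by
  rw [← (WR G σ r v).toFinite.cast_ncard_eq, Nat.cast_le]
  exact Finset.le_sup (f := fun v ↦ (WR G σ r v).ncard) (Finset.mem_univ v)

theorem sub_wcol_le_ncard [Fintype α] {n : ℕ} {T : Set α} {v : α}
    (h : (n : ℕ∞) ≤ T.encard + (WR G σ r v).encard) : (n : ℤ) - wcol G σ r ≤ T.ncard := by
  have hle : (n : ℕ∞) ≤ T.ncard + wcol G σ r := by
    rw [T.toFinite.cast_ncard_eq]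
    exact h.trans (by gcongr; exact encard_WR_le_wcol v)
  norm_cast at hle
  omega

theorem mem_WR_of_isGreatest {A : Finset α} (hcard : A.card ≤ r + 1)
    (hconn : (G.induce (A : Set α)).Preconnected) {u m : α} (hu : u ∈ A)
    (hm : IsGreatest (A : Set α) m) : m ∈ WR G σ r u := by
  obtain ⟨p, hp⟩ := (hconn ⟨u, hu⟩ ⟨m, hm.1⟩).exists_isPath
  have hlength : p.length < A.card := by simpa using hp.length_lt
  refine ⟨p.map (SimpleGraph.Embedding.induce (A : Set α)).toHom, ?_, fun w hw ↦ ?_⟩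
  · exact (p.length_map _).trans_le (by omega)
  · obtain ⟨x, -, rfl⟩ := List.mem_map.1 (p.support_map _ ▸ hw)
    exact hm.2 x.2

variable [DecidableEq α] {𝒮 : Set (Finset α)} {S : Set α} {X : Finset α} {v : α}

theorem IsSunflower.encard_le_of_isGreatest (h : IsSunflower 𝒮 X)
    (hcard : ∀ A ∈ 𝒮, A.card ≤ r + 1)
    (hconn : ∀ A ∈ 𝒮, (G.induce (A : Set α)).Preconnected)
    (hS : ∀ A ∈ 𝒮, (S ∩ A).Nonempty) (hSX : Disjoint S X)
    (hv : ∀ A ∈ 𝒮, IsGreatest (A : Set α) v) :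
    𝒮.encard ≤ {u ∈ S | v ∈ WR G σ r u}.encard := by
  refine h.encard_le_encard fun A hA ↦ ?_
  obtain ⟨u, huS, huA⟩ := hS A hA
  exact ⟨u, huA, Set.disjoint_left.1 hSX huS, huS,
    mem_WR_of_isGreatest (hcard A hA) (hconn A hA) huA (hv A hA)⟩

theorem IsSunflower.encard_le_of_not_isGreatest (h : IsSunflower 𝒮 X)
    (hcard : ∀ A ∈ 𝒮, A.card ≤ r + 1)
    (hconn : ∀ A ∈ 𝒮, (G.induce (A : Set α)).Preconnected)
    (hvX : v ∈ upperBounds (X : Set α)) (hvA : ∀ A ∈ 𝒮, v ∈ A)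
    (hv : ∀ A ∈ 𝒮, ¬ IsGreatest (A : Set α) v) :
    𝒮.encard ≤ (WR G σ r v).encard := by
  refine h.encard_le_encard fun A hA ↦ ?_
  have hm := A.isGreatest_max' ⟨v, hvA A hA⟩
  refine ⟨_, hm.1, fun hmX ↦ hv A hA ?_,
    mem_WR_of_isGreatest (hcard A hA) (hconn A hA) (hvA A hA) hm⟩
  exact le_antisymm (hvX hmX) (hm.2 (hvA A hA)) ▸ hm

theorem IsSunflower.encard_le_add_encard_WR (h : IsSunflower 𝒮 X) (h𝒮 : 𝒮.Nontrivial)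
    (hcard : ∀ A ∈ 𝒮, A.card ≤ r + 1)
    (hconn : ∀ A ∈ 𝒮, (G.induce (A : Set α)).Preconnected)
    (hS : ∀ A ∈ 𝒮, (S ∩ A).Nonempty) (hSX : Disjoint S X) (hv : IsGreatest (X : Set α) v) :
    𝒮.encard ≤ {u ∈ S | v ∈ WR G σ r u}.encard + (WR G σ r v).encard := by
  set 𝒮₁ := {A ∈ 𝒮 | IsGreatest (A : Set α) v}
  have h𝒮₁ : 𝒮₁ ⊆ 𝒮 := Set.sep_subset _ _
  have h𝒮₂ : 𝒮 \ 𝒮₁ ⊆ 𝒮 := Set.sdiff_subset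
  rw [← Set.encard_sdiff_add_encard_of_subset h𝒮₁, add_comm]
  gcongr
  · exact (h.mono h𝒮₁).encard_le_of_isGreatest (fun A hA ↦ hcard A hA.1)
      (fun A hA ↦ hconn A hA.1) (fun A hA ↦ hS A hA.1) hSX fun A hA ↦ hA.2
  · exact (h.mono h𝒮₂).encard_le_of_not_isGreatest (fun A hA ↦ hcard A hA.1)
      (fun A hA ↦ hconn A hA.1) hv.2 (fun A hA ↦ h.core_subset h𝒮 hA.1 hv.1)
      fun A hA hvA ↦ hA.2 ⟨hA.1, hvA⟩

end WeakReachability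

theorem stmt8_general {α : Type} [DecidableEq α] (G : SimpleGraph α) (σ : LinearOrder α) (γ : ℕ)
    (𝒱 : Set (Finset α)) (hsize : ∀ V ∈ 𝒱, V.card ≤ γ + 1)
    (hconn : ∀ V ∈ 𝒱, (G.induce (V : Set α)).Preconnected)
    (S : Set α) (hS : ∀ V ∈ 𝒱, (S ∩ V).Nonempty)
    (X : Finset α) (r : ℕ) (hcore : IsSunflowerWithCore 𝒱 r X) :
    (S ∩ X).Nonempty ∨ ∀ v, IsGreatest (X : Set α) v →
      (r : ℕ∞) ≤ {u ∈ S | v ∈ WR G σ γ u}.encard + (WR G σ γ v).encard := by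
  refine (Set.disjoint_or_nonempty_inter S X).symm.imp_right fun hSX v hv ↦ ?_
  obtain ⟨𝒮, h𝒮𝒱, rfl, hinter⟩ := hcore
  have hsun : IsSunflower (𝒮 : Set (Finset α)) X := fun A hA B hB ↦ hinter A hA B hB
  rw [← Set.encard_coe_eq_coe_finsetCard]
  rcases (𝒮 : Set (Finset α)).subsingleton_or_nontrivial with h𝒮 | h𝒮
  · calc (𝒮 : Set (Finset α)).encard ≤ 1 := Set.encard_le_one_iff_subsingleton.2 h𝒮
      _ ≤ (WR G σ γ v).encard := Set.one_le_encard_iff_nonempty.2 ⟨v, self_mem_WR v⟩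
      _ ≤ _ := le_add_self
  · exact hsun.encard_le_add_encard_WR h𝒮 (fun A hA ↦ hsize A (h𝒮𝒱 hA))
      (fun A hA ↦ hconn A (h𝒮𝒱 hA)) (fun A hA ↦ hS A (h𝒮𝒱 hA)) hSX hv

/-- let `𝒱` consist of subsets of `V(G)` of size at most `γ` inducing
connected subgraphs, let `S` be a hitting set of `𝒱`, let `δ ≥ 1`, and let `X` be
a nonempty core of an `r`-sunflower in `𝒱` with `r ≥ δ`.  Then either `S ∩ X ≠ ∅`,
or the `σ`-maximum vertex `v*` of `X` satisfies
`|{u ∈ S : v* ∈ WR_γ(G,σ,u)}| ≥ δ − wcol_γ(G,σ)`. -/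
theorem stmt8 {α : Type} [Fintype α] [DecidableEq α]
    (G : SimpleGraph α) (σ : LinearOrder α) (γ : ℕ) (hγ : 1 ≤ γ)
    (𝒱 : Set (Finset α))
    (hsize : ∀ V ∈ 𝒱, V.card ≤ γ)
    (hconn : ∀ V ∈ 𝒱, (G.induce (↑V : Set α)).Connected)
    (S : Finset α) (hS : ∀ V ∈ 𝒱, (S ∩ V).Nonempty)
    (δ : ℕ) (hδ : 1 ≤ δ)
    (X : Finset α) (hX : X.Nonempty)
    (r : ℕ) (hr : δ ≤ r) (hcore : IsSunflowerWithCore 𝒱 r X) :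
    (S ∩ X).Nonempty ∨
      ∀ v' ∈ X, (∀ x ∈ X, σ.le x v') →
        (δ : ℤ) - (wcol G σ γ : ℤ) ≤
          (({u ∈ (↑S : Set α) | v' ∈ WR G σ γ u}).ncard : ℤ) := by
  rcases stmt8_general G σ γ 𝒱 (fun V hV ↦ (hsize V hV).trans γ.le_succ)
    (fun V hV ↦ (hconn V hV).preconnected) S (mod_cast hS) X r hcore with hSX | hle
  · exact .inl (mod_cast hSX)
  · exact .inr fun v hv hmax ↦
      sub_wcol_le_ncard ((Nat.cast_le.2 hr).trans (hle v ⟨hv, hmax⟩))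
end

section
/- Let G be a finite simple graph, σ a linear order on V(G), and γ ≥ 1 an integer. Let 𝒱 be a collection of subsets of V(G) such that every V ∈ 𝒱 satisfies |V| ≤ γ and G[V] is connected. Write w = wcol_{2γ}(G,σ) and let p > 0. If B ⊆ V(G) is such that every vertex v ∈ B γ-witnesses (with respect to σ) at least ⌈(1+p)/p · w⌉ pairwise disjoint members of 𝒱, then |B| ≤ p·τ(𝒱), where τ(𝒱) is the minimum size of a hitting set of 𝒱. -/
/-- `N_G[V]`: the closed neighborhood of the vertex set `V` in `G`. -/
def closedNbhd {α : Type} (G : SimpleGraph α) (V : Finset α) : Set α :=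
  ↑V ∪ {u | ∃ x ∈ V, G.Adj u x}

/-- `v` `t`-witnesses `V` with respect to `σ`: some `u ∈ N_G[V]` has `v ∈ WR_t(G,σ,u)`. -/
def Witnesses {α : Type} (G : SimpleGraph α) (σ : LinearOrder α) (t : ℕ)
    (v : α) (V : Finset α) : Prop :=
  ∃ u ∈ closedNbhd G V, v ∈ WR G σ t u

/-- `τ(𝒱)`: the minimum size of a hitting set of `𝒱`. -/
noncomputable def tau {α : Type} [DecidableEq α] (𝒱 : Set (Finset α)) : ℕ :=
  sInf {n | ∃ S : Finset α, (∀ V ∈ 𝒱, (S ∩ V).Nonempty) ∧ S.card = n}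

/-!
Let `v ∈ B` witness a connected set `V`, and let `s ∈ V` belong to a minimum hitting set `S`. Going
from `v` to `V` and then inside `V` to `s` takes at most `2γ` steps, and the `σ`-largest vertex `m`
of this walk is weakly reachable from both ends. Outside `V` the walk stays below `v`, so either
`m ∈ V`, or `m = v` and `v` is weakly reachable from `s`. Hence `{s ∈ S | v ∈ WR s} ∪ WR v` hits
each of the disjoint sets witnessed by `v`. There are at least `(1 + p) / p * w` of them and `WR v`
has at most `w` elements, so `v ∈ WR s` for at least `w / p` vertices `s ∈ S`. Each `s ∈ S` occurs
for at most `w` vertices `v`, and double counting gives `|B| * (w / p) ≤ |S| * w`.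
-/

theorem le_mul_of_mul_ceil_le_add_mul {b τ w : ℕ} {p : ℝ} (hp : 0 < p) (hw : 0 < w)
    (h : b * ⌈((1 + p) / p) * (w : ℝ)⌉₊ ≤ (b + τ) * w) : (b : ℝ) ≤ p * τ := by
  have hscaled : (b * ((1 + p) / p)) * (w : ℝ) ≤ (b + τ) * w :=
    calc (b * ((1 + p) / p)) * (w : ℝ)
        = b * (((1 + p) / p) * w) := mul_assoc _ _ _
      _ ≤ b * ⌈((1 + p) / p) * (w : ℝ)⌉₊ := by
          gcongr
          exact Nat.le_ceil _
      _ ≤ (b + τ) * w := mod_cast h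
  have hcancel : b * ((1 + p) / p) ≤ (b + τ : ℝ) :=
    le_of_mul_le_mul_right hscaled (Nat.cast_pos.2 hw)
  rw [← mul_div_assoc, div_le_iff₀ hp] at hcancel
  linarith

section HittingSet

variable {α : Type*} [DecidableEq α] {𝒱 : Set (Finset α)}

/-- `S` is a hitting set of `𝒱`, in the form used by `tau`. -/
def IsHittingSet (S : Finset α) (𝒱 : Set (Finset α)) : Prop :=
  ∀ V ∈ 𝒱, (S ∩ V).Nonempty

theorem isHittingSet_univ [Fintype α] (h𝒱 : ∀ V ∈ 𝒱, V.Nonempty) :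
    IsHittingSet Finset.univ 𝒱 := fun V hV => by
  simpa only [Finset.univ_inter] using h𝒱 V hV

theorem IsHittingSet.exists_card_eq_tau {α : Type} [DecidableEq α] {𝒱 : Set (Finset α)}
    {T : Finset α} (hT : IsHittingSet T 𝒱) :
    ∃ S, IsHittingSet S 𝒱 ∧ S.card = tau 𝒱 := by
  have hne : {n | ∃ S, IsHittingSet S 𝒱 ∧ S.card = n}.Nonempty := ⟨T.card, T, hT, rfl⟩
  exact Nat.sInf_mem hne

theorem IsHittingSet.card_le_of_pairwiseDisjoint {T : Finset α} {𝒟 : Finset (Finset α)}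
    (hT : IsHittingSet T (𝒟 : Set (Finset α)))
    (hdisj : (𝒟 : Set (Finset α)).PairwiseDisjoint id) : 𝒟.card ≤ T.card := by
  refine Finset.card_le_card_of_forall_subsingleton (fun V x => x ∈ V) (fun V hV => ?_) ?_
  · obtain ⟨x, hx⟩ := hT V hV
    exact ⟨x, Finset.mem_inter.1 hx⟩
  · rintro x - A ⟨hA, hxA⟩ A' ⟨hA', hxA'⟩
    exact hdisj.elim_finset hA hA' x hxA hxA'

end HittingSet

section WeakReachability

variable {α : Type} {G : SimpleGraph α} {σ : LinearOrder α} {r t k : ℕ} {v : α} {V : Finset α}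

theorem mem_WR_self : v ∈ WR G σ r v :=
  ⟨.nil, Nat.zero_le r, fun _ hw => (List.mem_singleton.1 hw).le⟩

theorem exists_max_mem_support_mem_WR {a b : α} (q : G.Walk a b) (hq : q.length ≤ r) :
    ∃ m ∈ q.support, (∀ w ∈ q.support, σ.le w m) ∧ m ∈ WR G σ r a ∧ m ∈ WR G σ r b := by
  obtain ⟨m, hm, hmax⟩ : ∃ m ∈ q.support, ∀ w ∈ q.support, σ.le w m := by
    simpa only [List.mem_toFinset, id_eq] using
      q.support.toFinset.exists_max_image id ⟨a, List.mem_toFinset.2 q.start_mem_support⟩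
  refine ⟨m, hm, hmax,
    ⟨q.takeUntil m hm, (q.length_takeUntil_le_length hm).trans hq, fun w hw =>
      hmax w (q.support_takeUntil_subset_support hm hw)⟩,
    ⟨(q.dropUntil m hm).reverse, ?_, fun w hw => ?_⟩⟩
  · rw [SimpleGraph.Walk.length_reverse]
    exact (q.length_dropUntil_le_length hm).trans hq
  · rw [SimpleGraph.Walk.support_reverse, List.mem_reverse] at hw
    exact hmax w (q.support_dropUntil_subset_support hm hw)

theorem exists_walk_length_lt_card_of_induce_preconnected
    (hV : (G.induce (V : Set α)).Preconnected) {x y : α} (hx : x ∈ V) (hy : y ∈ V) :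
    ∃ q : G.Walk x y, q.length < V.card ∧ ∀ w ∈ q.support, w ∈ V := by
  classical
  obtain ⟨q, hq⟩ := (hV ⟨x, hx⟩ ⟨y, hy⟩).exists_isPath
  let f : G.induce (V : Set α) →g G := (SimpleGraph.Embedding.induce (V : Set α)).toHom
  refine ⟨q.map f, ?_, fun w hw => ?_⟩
  · calc (q.map f).length = q.length := q.length_map f
      _ < Fintype.card (V : Set α) := hq.length_lt
      _ = V.card := Fintype.card_coe V
  · obtain ⟨u, -, rfl⟩ := List.mem_map.1 (q.support_map f ▸ hw)
    exact u.2

theorem Witnesses.exists_walk (hv : Witnesses G σ t v V) :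
    ∃ x ∈ V, ∃ q : G.Walk x v, q.length ≤ t + 1 ∧ ∀ w ∈ q.support, w ∈ V ∨ σ.le w v := by
  obtain ⟨u, hu | ⟨x, hx, hux⟩, q, hqt, hqv⟩ := hv
  · exact ⟨u, hu, q, hqt.trans t.le_succ, fun w hw => .inr (hqv w hw)⟩
  · refine ⟨x, hx, .cons hux.symm q, Nat.succ_le_succ hqt, fun w hw => ?_⟩
    rcases List.mem_cons.1 hw with rfl | hw
    · exact .inl hx
    · exact .inr (hqv w hw)

theorem Witnesses.exists_walk_of_preconnected (hv : Witnesses G σ t v V)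
    (hconn : (G.induce (V : Set α)).Preconnected) {s : α} (hs : s ∈ V) :
    ∃ q : G.Walk s v, q.length ≤ t + V.card ∧ ∀ w ∈ q.support, w ∈ V ∨ σ.le w v := by
  obtain ⟨x, hx, q, hqt, hqv⟩ := hv.exists_walk
  obtain ⟨q', hq'V, hq'⟩ := exists_walk_length_lt_card_of_induce_preconnected hconn hs hx
  refine ⟨q'.append q, ?_, fun w hw => ?_⟩
  · rw [SimpleGraph.Walk.length_append]
    omega
  · rcases (SimpleGraph.Walk.mem_support_append_iff _ _).1 hw with hw | hw
    · exact .inl (hq' w hw)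
    · exact hqv w hw

theorem Witnesses.mem_WR_or_exists_mem_WR (hv : Witnesses G σ t v V)
    (hconn : (G.induce (V : Set α)).Preconnected) (hcard : V.card ≤ k) {s : α} (hs : s ∈ V) :
    v ∈ WR G σ (t + k) s ∨ ∃ m ∈ V, m ∈ WR G σ (t + k) v := by
  obtain ⟨q, hqt, hqv⟩ := hv.exists_walk_of_preconnected hconn hs
  obtain ⟨m, hm, hmax, hms, hmv⟩ := exists_max_mem_support_mem_WR (σ := σ) q (r := t + k) (by omega)
  rcases hqv m hm with hmV | hmv'
  · exact .inr ⟨m, hmV, hmv⟩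
  · have hmeq : m = v := σ.le_antisymm m v hmv' (hmax v q.end_mem_support)
    exact .inl (hmeq ▸ hms)

end WeakReachability

section Counting

variable {α : Type} [Fintype α] {G : SimpleGraph α} {σ : LinearOrder α} {r t k : ℕ}

open scoped Classical in
theorem card_filter_mem_WR_le_wcol (B : Finset α) (v : α) :
    {u ∈ B | u ∈ WR G σ r v}.card ≤ wcol G σ r := by
  calc {u ∈ B | u ∈ WR G σ r v}.card
      = ({u ∈ B | u ∈ WR G σ r v} : Set α).ncard := by
        rw [← Set.ncard_coe_finset, Finset.coe_filter]
    _ ≤ (WR G σ r v).ncard := Set.ncard_le_ncard fun u hu => hu.2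
    _ ≤ wcol G σ r := Finset.le_sup (f := fun v => (WR G σ r v).ncard) (Finset.mem_univ v)

theorem wcol_pos [Nonempty α] : 0 < wcol G σ r := by
  classical
  obtain ⟨v⟩ := ‹Nonempty α›
  have hv : v ∈ ({u | u ∈ WR G σ r v} : Finset α) :=
    Finset.mem_filter.2 ⟨Finset.mem_univ v, mem_WR_self⟩
  exact (Finset.card_pos.2 ⟨v, hv⟩).trans_le (card_filter_mem_WR_le_wcol Finset.univ v)

variable [DecidableEq α] {𝒱 : Set (Finset α)} {S : Finset α}

open scoped Classical in
theorem IsHittingSet.filter_mem_WR_union (hS : IsHittingSet S 𝒱)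
    (hcard : ∀ V ∈ 𝒱, V.card ≤ k) (hconn : ∀ V ∈ 𝒱, (G.induce (V : Set α)).Preconnected)
    {v : α} (hv : ∀ V ∈ 𝒱, Witnesses G σ t v V) :
    IsHittingSet ({s ∈ S | v ∈ WR G σ (t + k) s} ∪
      {m ∈ (Finset.univ : Finset α) | m ∈ WR G σ (t + k) v}) 𝒱 := by
  intro V hV
  obtain ⟨s, hs⟩ := hS V hV
  obtain ⟨hsS, hsV⟩ := Finset.mem_inter.1 hs
  rcases (hv V hV).mem_WR_or_exists_mem_WR (hconn V hV) (hcard V hV) hsV with hvs | ⟨m, hmV, hmv⟩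
  · exact ⟨s, Finset.mem_inter.2
      ⟨Finset.mem_union_left _ (Finset.mem_filter.2 ⟨hsS, hvs⟩), hsV⟩⟩
  · exact ⟨m, Finset.mem_inter.2
      ⟨Finset.mem_union_right _ (Finset.mem_filter.2 ⟨Finset.mem_univ m, hmv⟩), hmV⟩⟩

open scoped Classical in
theorem IsHittingSet.card_le_card_filter_mem_WR_add_wcol {𝒟 : Finset (Finset α)}
    (hS : IsHittingSet S (𝒟 : Set (Finset α))) (hcard : ∀ V ∈ 𝒟, V.card ≤ k)
    (hconn : ∀ V ∈ 𝒟, (G.induce (V : Set α)).Preconnected)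
    (hdisj : (𝒟 : Set (Finset α)).PairwiseDisjoint id)
    {v : α} (hv : ∀ V ∈ 𝒟, Witnesses G σ t v V) :
    𝒟.card ≤ {s ∈ S | v ∈ WR G σ (t + k) s}.card + wcol G σ (t + k) :=
  calc 𝒟.card
      ≤ ({s ∈ S | v ∈ WR G σ (t + k) s} ∪
          {m ∈ (Finset.univ : Finset α) | m ∈ WR G σ (t + k) v}).card :=
        (hS.filter_mem_WR_union hcard hconn hv).card_le_of_pairwiseDisjoint hdisj
    _ ≤ {s ∈ S | v ∈ WR G σ (t + k) s}.card +
          {m ∈ (Finset.univ : Finset α) | m ∈ WR G σ (t + k) v}.card :=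
        Finset.card_union_le _ _
    _ ≤ {s ∈ S | v ∈ WR G σ (t + k) s}.card + wcol G σ (t + k) :=
        Nat.add_le_add_left (card_filter_mem_WR_le_wcol Finset.univ v) _

theorem IsHittingSet.card_mul_le_card_add_card_mul_wcol (hS : IsHittingSet S 𝒱)
    (hcard : ∀ V ∈ 𝒱, V.card ≤ k) (hconn : ∀ V ∈ 𝒱, (G.induce (V : Set α)).Preconnected)
    {B : Finset α} {d : ℕ}
    (hB : ∀ v ∈ B, ∃ 𝒟 : Finset (Finset α), ↑𝒟 ⊆ 𝒱 ∧ d ≤ 𝒟.card ∧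
      (𝒟 : Set (Finset α)).PairwiseDisjoint id ∧ ∀ V ∈ 𝒟, Witnesses G σ t v V) :
    B.card * d ≤ (B.card + S.card) * wcol G σ (t + k) := by
  classical
  have hcharge : ∀ v ∈ B, d ≤ {s ∈ S | v ∈ WR G σ (t + k) s}.card + wcol G σ (t + k) := by
    intro v hv
    obtain ⟨𝒟, h𝒟, hd, hdisj, hwit⟩ := hB v hv
    exact hd.trans <| IsHittingSet.card_le_card_filter_mem_WR_add_wcol
      (fun V hV => hS V (h𝒟 hV)) (fun V hV => hcard V (h𝒟 hV)) (fun V hV => hconn V (h𝒟 hV))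
      hdisj hwit
  calc B.card * d
      ≤ ∑ v ∈ B, ({s ∈ S | v ∈ WR G σ (t + k) s}.card + wcol G σ (t + k)) :=
        Finset.card_nsmul_le_sum B _ d hcharge
    _ = ∑ s ∈ S, {v ∈ B | v ∈ WR G σ (t + k) s}.card + B.card * wcol G σ (t + k) := by
        rw [Finset.sum_add_distrib, Finset.sum_const, smul_eq_mul]
        exact congrArg (· + _) (Finset.sum_card_bipartiteAbove_eq_sum_card_bipartiteBelow
          fun v s => v ∈ WR G σ (t + k) s)
    _ ≤ S.card * wcol G σ (t + k) + B.card * wcol G σ (t + k) :=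
        Nat.add_le_add_right
          (Finset.sum_le_card_nsmul S _ _ fun s _ => card_filter_mem_WR_le_wcol B s) _
    _ = (B.card + S.card) * wcol G σ (t + k) := by ring

end Counting

/-- let `𝒱` consist of subsets of `V(G)` of size at most `γ` inducing
connected subgraphs, write `w = wcol_{2γ}(G,σ)` and let `p > 0`.  If every vertex of
`B` `γ`-witnesses at least `⌈(1+p)/p · w⌉` pairwise disjoint members of `𝒱`, then
`|B| ≤ p·τ(𝒱)`. -/
theorem stmt9 {α : Type} [Fintype α] [DecidableEq α]
    (G : SimpleGraph α) (σ : LinearOrder α) (γ : ℕ) (hγ : 1 ≤ γ)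
    (𝒱 : Set (Finset α))
    (hsize : ∀ V ∈ 𝒱, V.card ≤ γ)
    (hconn : ∀ V ∈ 𝒱, (G.induce (↑V : Set α)).Connected)
    (p : ℝ) (hp : 0 < p)
    (B : Finset α)
    (hB : ∀ v ∈ B, ∃ 𝒟 : Finset (Finset α), ↑𝒟 ⊆ 𝒱 ∧
      ⌈((1 + p) / p) * (wcol G σ (2 * γ) : ℝ)⌉₊ ≤ 𝒟.card ∧
      (∀ A ∈ 𝒟, ∀ A' ∈ 𝒟, A ≠ A' → Disjoint A A') ∧
      ∀ V ∈ 𝒟, Witnesses G σ γ v V) :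
    (B.card : ℝ) ≤ p * (tau 𝒱 : ℝ) := by
  rcases B.eq_empty_or_nonempty with rfl | ⟨b, -⟩
  · rw [Finset.card_empty, Nat.cast_zero]
    positivity
  have : Nonempty α := ⟨b⟩
  obtain ⟨S, hS, hSτ⟩ := (isHittingSet_univ fun V hV =>
    Set.nonempty_coe_sort.1 (hconn V hV).nonempty).exists_card_eq_tau
  refine le_mul_of_mul_ceil_le_add_mul hp (w := wcol G σ (2 * γ)) wcol_pos ?_
  rw [← hSτ]
  rw [two_mul] at hB ⊢
  refine hS.card_mul_le_card_add_card_mul_wcol hsize (fun V hV => (hconn V hV).preconnected) ?_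
  intro v hv
  obtain ⟨𝒟, h𝒟, hd, hdisj, hwit⟩ := hB v hv
  exact ⟨𝒟, h𝒟, hd, fun A hA A' hA' => hdisj A hA A' hA', hwit⟩
end

section
/- Let G be a finite simple graph, σ a linear order on V(G), and γ ≥ 2, δ ≥ 1 integers. Let 𝒱 be a collection of subsets of V(G) such that every V ∈ 𝒱 satisfies |V| ≤ γ and G[V] is connected. Let Γ be the collection of all nonempty X ⊆ V(G) that are the core of a (δ·γ^{|X|})-sunflower in 𝒱, and Γ* its inclusion-minimal members. If a vertex v γ-witnesses (with respect to σ) at least (δ·γ^γ)^{γ+1}·γ! members of Γ*, then v γ-witnesses δ pairwise disjoint members of 𝒱. -/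
/-- `Γ`: the collection of all nonempty sets `X` that are the core of a
`(δ·γ^{|X|})`-sunflower in `𝒱`. -/
def GammaColl {α : Type} [DecidableEq α] (𝒱 : Set (Finset α)) (γ δ : ℕ) :
    Set (Finset α) :=
  {X | X.Nonempty ∧ IsSunflowerWithCore 𝒱 (δ * γ ^ X.card) X}

/-- `Γ*`: the inclusion-minimal members of `Γ`. -/
def GammaMin {α : Type} [DecidableEq α] (𝒱 : Set (Finset α)) (γ δ : ℕ) :
    Set (Finset α) :=
  {X ∈ GammaColl 𝒱 γ δ | ∀ Y ∈ GammaColl 𝒱 γ δ, Y ⊆ X → Y = X}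

/-!
A `(δ * γ ^ γ)`-sunflower `𝒮` with core `Y` exists inside `Γ*` by the Erdős–Rado sunflower lemma.
Since `Γ*` is an antichain, `Y` is a proper subset of every `X ∈ 𝒮`, so each such `X` is the core of
a sunflower in `𝒱` with at least `δ * γ ^ #Y * γ` petals. Keep only `δ * γ ^ #Y` members of `𝒮` and
replace them, one after the other, by petals around them: the other members cover fewer than
`δ * γ ^ #Y * γ` vertices, so some petal meets them only inside `X`. The outcome is a
`(δ * γ ^ #Y)`-sunflower in `𝒱` with core `Y`. If `Y` were nonempty it would belong to `Γ`,
contradicting minimality; hence `Y = ∅` and the new sunflower consists of `δ` disjoint sets, each of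
which is witnessed because it contains a witnessed set.
-/

section SetFamily

open Finset

variable {α : Type*} [DecidableEq α]

theorem card_memberSubfamily (𝓕 : Finset (Finset α)) (x : α) :
    #(𝓕.memberSubfamily x) = #{A ∈ 𝓕 | x ∈ A} :=
  card_image_of_injOn <| (erase_injOn' x).mono fun _ hA ↦ (mem_filter.1 hA).2

-- The alternative `A = B` accounts for `A = ∅`, which is disjoint from every set, even from itself.
theorem exists_maximal_pairwise_disjoint_subfamily (𝓕 : Finset (Finset α)) :
    ∃ 𝓜 ⊆ 𝓕, (∀ A ∈ 𝓜, ∀ B ∈ 𝓜, A ≠ B → A ∩ B = ∅) ∧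
      ∀ A ∈ 𝓕, ∃ B ∈ 𝓜, A = B ∨ ¬Disjoint A B := by
  obtain ⟨𝓜, h𝓜⟩ :=
    (𝓕.powerset.finite_toSet.subset (Set.sep_subset _ fun 𝓜 : Finset (Finset α) ↦
      (𝓜 : Set (Finset α)).PairwiseDisjoint id)).exists_maximal ⟨∅, by simp⟩
  simp only [mem_coe, mem_powerset] at h𝓜
  refine ⟨𝓜, h𝓜.prop.1,
    fun A hA B hB hAB ↦ disjoint_iff_inter_eq_empty.1 (h𝓜.prop.2 hA hB hAB), fun A hA ↦ ?_⟩
  by_contra! hdisj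
  have hinsert : insert A 𝓜 ⊆ 𝓜 := h𝓜.le_of_ge
    ⟨insert_subset hA h𝓜.prop.1, by
      rw [coe_insert]
      exact h𝓜.prop.2.insert fun B hB _ ↦ (hdisj B hB).2⟩
    (subset_insert A 𝓜)
  exact (hdisj A (hinsert (mem_insert_self A 𝓜))).1 rfl

theorem exists_lt_card_filter_mem {𝓕 𝓜 : Finset (Finset α)} {k d : ℕ} (hkd : 0 < k * d)
    (hk : ∀ B ∈ 𝓜, #B ≤ k) (hcover : ∀ A ∈ 𝓕, ∃ B ∈ 𝓜, A = B ∨ ¬Disjoint A B)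
    (hcard : #𝓜 * (k * d) < #𝓕) : ∃ x, d < #{A ∈ 𝓕 | x ∈ A} := by
  by_contra! hd
  have hclass : ∀ B ∈ 𝓜, #{A ∈ 𝓕 | A = B ∨ ¬Disjoint A B} ≤ k * d := by
    intro B hB
    obtain rfl | ⟨b, hb⟩ := B.eq_empty_or_nonempty
    · refine (card_le_card (t := {∅}) fun A hA ↦ ?_).trans hkd
      simpa using (mem_filter.1 hA).2
    calc #{A ∈ 𝓕 | A = B ∨ ¬Disjoint A B}
        ≤ #(B.biUnion fun x ↦ {A ∈ 𝓕 | x ∈ A}) := card_le_card fun A hA ↦ by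
          simp only [mem_filter, not_disjoint_iff] at hA
          simp only [mem_biUnion, mem_filter]
          obtain ⟨hA𝓕, rfl | ⟨x, hxA, hxB⟩⟩ := hA
          exacts [⟨b, hb, hA𝓕, hb⟩, ⟨x, hxB, hA𝓕, hxA⟩]
      _ ≤ #B * d := card_biUnion_le_card_mul _ _ _ fun x _ ↦ hd x
      _ ≤ k * d := Nat.mul_le_mul_right d (hk B hB)
  have hunion : 𝓕 ⊆ 𝓜.biUnion fun B ↦ {A ∈ 𝓕 | A = B ∨ ¬Disjoint A B} := fun A hA ↦ by
    obtain ⟨B, hB, hAB⟩ := hcover A hA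
    exact mem_biUnion.2 ⟨B, hB, mem_filter.2 ⟨hA, hAB⟩⟩
  exact hcard.not_ge <|
    (card_le_card hunion).trans (card_biUnion_le_card_mul _ _ _ hclass)

end SetFamily

section Sunflower

open Finset
open scoped Nat

variable {α : Type} [DecidableEq α]

namespace IsSunflowerWithCore

variable {𝒰 𝒱 : Set (Finset α)} {r s γ : ℕ} {X Y : Finset α}

theorem nonempty (h : IsSunflowerWithCore 𝒰 r Y) (hr : 1 ≤ r) : 𝒰.Nonempty := by
  obtain ⟨𝒮, h𝒮, rfl, -⟩ := h
  obtain ⟨A, hA⟩ := card_pos.1 hr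
  exact ⟨A, h𝒮 hA⟩

theorem mono (h : IsSunflowerWithCore 𝒰 r Y) (h𝒰 : 𝒰 ⊆ 𝒱) : IsSunflowerWithCore 𝒱 r Y := by
  obtain ⟨𝒮, h𝒮, hr, hY⟩ := h
  exact ⟨𝒮, h𝒮.trans h𝒰, hr, hY⟩

theorem mono_card (h : IsSunflowerWithCore 𝒰 s Y) (hrs : r ≤ s) : IsSunflowerWithCore 𝒰 r Y := by
  obtain ⟨𝒮, h𝒮, rfl, hY⟩ := h
  obtain ⟨𝒯, h𝒯, hr⟩ := exists_subset_card_eq hrs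
  exact ⟨𝒯, (coe_subset.2 h𝒯).trans h𝒮, hr, fun A hA B hB ↦ hY A (h𝒯 hA) B (h𝒯 hB)⟩

theorem of_injOn {ι : Type*} {s : Finset ι} {g : ι → Finset α} (hg : ∀ i ∈ s, g i ∈ 𝒰)
    (hinj : Set.InjOn g s) (hY : ∀ i ∈ s, ∀ j ∈ s, i ≠ j → g i ∩ g j = Y) :
    IsSunflowerWithCore 𝒰 #s Y := by
  refine ⟨s.image g, ?_, card_image_of_injOn hinj, ?_⟩
  · rw [coe_image]
    exact Set.image_subset_iff.2 hg
  · simp only [forall_mem_image]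
    exact fun i hi j hj hne ↦ hY i hi j hj (ne_of_apply_ne g hne)

theorem restrict_core_subset (h : IsSunflowerWithCore 𝒰 r Y) (hr : 2 ≤ r) :
    IsSunflowerWithCore {A ∈ 𝒰 | Y ⊆ A} r Y := by
  obtain ⟨𝒮, h𝒮, rfl, hY⟩ := h
  refine ⟨𝒮, fun A hA ↦ ⟨h𝒮 hA, ?_⟩, rfl, hY⟩
  obtain ⟨B, hB, hBA⟩ := exists_mem_ne hr A
  exact hY A hA B hB hBA.symm ▸ inter_subset_left

theorem restrict_core_ssubset (h : IsSunflowerWithCore 𝒰 r Y) (hr : 2 ≤ r)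
    (h𝒰 : IsAntichain (· ⊆ ·) 𝒰) : IsSunflowerWithCore {A ∈ 𝒰 | Y ⊂ A} r Y := by
  obtain ⟨𝒮, h𝒮, rfl, hY⟩ := h.restrict_core_subset hr
  refine ⟨𝒮, fun A hA ↦ ⟨(h𝒮 hA).1, (h𝒮 hA).2.ssubset_of_ne ?_⟩, rfl, hY⟩
  rintro rfl
  obtain ⟨B, hB, hBY⟩ := exists_mem_ne hr Y
  exact hBY (h𝒰.eq (h𝒮 hA).1 (h𝒮 hB).1 (h𝒮 hB).2).symm

theorem exists_petal_inter_subset (h : IsSunflowerWithCore 𝒰 r X) (hr : 2 ≤ r) {F : Finset α}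
    (hF : #F < r) : ∃ V ∈ 𝒰, X ⊆ V ∧ V ∩ F ⊆ X := by
  obtain ⟨𝒮, h𝒮, rfl, hX⟩ := h.restrict_core_subset hr
  suffices ∃ V ∈ 𝒮, V ∩ F ⊆ X from
    let ⟨V, hV, hVF⟩ := this
    ⟨V, (h𝒮 hV).1, (h𝒮 hV).2, hVF⟩
  by_contra! hmeets
  refine hF.not_ge <| card_le_card_of_forall_subsingleton (fun V x ↦ x ∈ V ∧ x ∉ X) ?_ ?_
  · intro V hV
    obtain ⟨x, hx, hxX⟩ := not_subset.1 (hmeets V hV)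
    exact ⟨x, (mem_inter.1 hx).2, (mem_inter.1 hx).1, hxX⟩
  · rintro x - A ⟨hA, hxA, hxX⟩ B ⟨hB, hxB, -⟩
    by_contra hAB
    exact hxX (hX A hA B hB hAB ▸ mem_inter.2 ⟨hxA, hxB⟩)

theorem card_core_le (h : IsSunflowerWithCore 𝒰 r X) (hr : 2 ≤ r) (hγ : ∀ V ∈ 𝒰, #V ≤ γ) :
    #X ≤ γ := by
  obtain ⟨V, hV, hXV, -⟩ := h.exists_petal_inter_subset hr (F := ∅) (by rw [card_empty]; lia)
  exact (card_le_card hXV).trans (hγ V hV)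

theorem insert_core {𝓕 : Finset (Finset α)} {x : α}
    (h : IsSunflowerWithCore (𝓕.memberSubfamily x) r Y) :
    IsSunflowerWithCore 𝓕 r (insert x Y) := by
  obtain ⟨𝒮, h𝒮, rfl, hY⟩ := h
  have hmem : ∀ A ∈ 𝒮, insert x A ∈ 𝓕 ∧ x ∉ A := fun A hA ↦ mem_memberSubfamily.1 (h𝒮 hA)
  refine of_injOn (fun A hA ↦ (hmem A hA).1) ?_ fun A hA B hB hAB ↦ ?_
  · exact insert_erase_invOn.2.injOn.mono fun A hA ↦ (hmem A hA).2
  · rw [← insert_inter_distrib, hY A hA B hB hAB]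

end IsSunflowerWithCore

theorem exists_isSunflowerWithCore_of_lt_card {r k : ℕ} {𝓕 : Finset (Finset α)}
    (hk : ∀ A ∈ 𝓕, #A ≤ k) (hcard : r ^ k * k ! < #𝓕) :
    ∃ Y, IsSunflowerWithCore (𝓕 : Set (Finset α)) (r + 1) Y := by
  induction k generalizing 𝓕 with
  | zero =>
    have hempty : 𝓕 ⊆ {∅} := fun A hA ↦ by simpa using hk A hA
    have hle : #𝓕 ≤ 1 := card_le_card hempty
    rw [pow_zero, Nat.factorial_zero] at hcard
    lia
  | succ k ih =>
    obtain ⟨𝓜, h𝓜, hdisj, hcover⟩ := exists_maximal_pairwise_disjoint_subfamily 𝓕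
    obtain hr | hr := lt_or_ge r #𝓜
    · exact ⟨∅, IsSunflowerWithCore.mono_card ⟨𝓜, h𝓜, rfl, hdisj⟩ hr⟩
    have hr0 : 0 < r := by
      obtain ⟨A, hA⟩ : 𝓕.Nonempty := card_pos.1 (by lia)
      obtain ⟨B, hB, -⟩ := hcover A hA
      exact (card_pos.2 ⟨B, hB⟩).trans_le hr
    obtain ⟨x, hx⟩ : ∃ x, r ^ k * k ! < #{A ∈ 𝓕 | x ∈ A} := by
      refine exists_lt_card_filter_mem (by positivity) (fun B hB ↦ hk B (h𝓜 hB)) hcover ?_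
      calc #𝓜 * ((k + 1) * (r ^ k * k !)) ≤ r * ((k + 1) * (r ^ k * k !)) :=
            Nat.mul_le_mul_right _ hr
        _ = r ^ (k + 1) * (k + 1)! := by rw [Nat.factorial_succ]; ring
        _ < #𝓕 := hcard
    have hlink : ∀ A ∈ 𝓕.memberSubfamily x, #A ≤ k := fun A hA ↦ by
      obtain ⟨hA𝓕, hxA⟩ := mem_memberSubfamily.1 hA
      have := hk _ hA𝓕
      rw [card_insert_of_notMem hxA] at this
      lia
    obtain ⟨Y, hY⟩ := ih hlink (by rwa [card_memberSubfamily])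
    exact ⟨insert x Y, hY.insert_core⟩

theorem exists_isSunflowerWithCore_of_le_card {r k : ℕ} (hr : 2 ≤ r) {𝓕 : Finset (Finset α)}
    (hk : ∀ A ∈ 𝓕, #A ≤ k) (hcard : r ^ (k + 1) * k ! ≤ #𝓕) :
    ∃ Y, IsSunflowerWithCore (𝓕 : Set (Finset α)) r Y := by
  obtain ⟨q, rfl⟩ : ∃ q, r = q + 1 := ⟨r - 1, by lia⟩
  refine exists_isSunflowerWithCore_of_lt_card hk ?_
  calc q ^ k * k ! ≤ (q + 1) ^ k * k ! := by gcongr; lia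
    _ < (q + 1) ^ (k + 1) * k ! := by gcongr 1; exact Nat.pow_lt_pow_succ hr
    _ ≤ #𝓕 := hcard

variable {𝒱 : Set (Finset α)} {γ : ℕ} {𝒮 : Finset (Finset α)} {Y : Finset α}

theorem exists_petal_inter_eq (hγ : 2 ≤ γ) {X : Finset α} {g : Finset α → Finset α}
    (hX : X ∈ 𝒮) (hcore : IsSunflowerWithCore 𝒱 (#𝒮 * γ) X)
    (hY : ∀ A ∈ 𝒮, ∀ B ∈ 𝒮, A ≠ B → A ∩ B = Y) (hsub : ∀ A ∈ 𝒮, A ⊆ g A)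
    (hcard : ∀ A ∈ 𝒮, #(g A) ≤ γ) (hgY : ∀ A ∈ 𝒮, ∀ B ∈ 𝒮, A ≠ B → g A ∩ g B = Y) :
    ∃ V ∈ 𝒱, X ⊆ V ∧ ∀ B ∈ 𝒮, B ≠ X → V ∩ g B = Y := by
  have hpos : 0 < #𝒮 := card_pos.2 ⟨X, hX⟩
  have hothers : #((𝒮.erase X).biUnion g) < #𝒮 * γ :=
    calc #((𝒮.erase X).biUnion g) ≤ #(𝒮.erase X) * γ :=
          card_biUnion_le_card_mul _ _ _ fun A hA ↦ hcard A (mem_of_mem_erase hA)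
      _ < #𝒮 * γ := Nat.mul_lt_mul_of_pos_right (card_erase_lt_of_mem hX) (by lia)
  obtain ⟨V, hV, hXV, hVX⟩ := hcore.exists_petal_inter_subset
    (hγ.trans (Nat.le_mul_of_pos_left γ hpos)) hothers
  refine ⟨V, hV, hXV, fun B hB hBX ↦ Subset.antisymm ?_ ?_⟩
  · have hBothers : g B ⊆ (𝒮.erase X).biUnion g :=
      subset_biUnion_of_mem g (mem_erase.2 ⟨hBX, hB⟩)
    have hVB : V ∩ g B ⊆ X := (inter_subset_inter_left hBothers).trans hVX
    rw [← hgY X hX B hB hBX.symm]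
    exact subset_inter (hVB.trans (hsub X hX)) inter_subset_right
  · rw [← hY X hX B hB hBX.symm]
    exact inter_subset_inter hXV (hsub B hB)

theorem exists_extension_of_cores (hγ : 2 ≤ γ) (hsize : ∀ V ∈ 𝒱, #V ≤ γ)
    (hY : ∀ A ∈ 𝒮, ∀ B ∈ 𝒮, A ≠ B → A ∩ B = Y)
    (hcore : ∀ X ∈ 𝒮, IsSunflowerWithCore 𝒱 (#𝒮 * γ) X) :
    ∃ g : Finset α → Finset α, (∀ X ∈ 𝒮, X ⊆ g X) ∧ (∀ X ∈ 𝒮, g X ∈ 𝒱) ∧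
      ∀ A ∈ 𝒮, ∀ B ∈ 𝒮, A ≠ B → g A ∩ g B = Y := by
  suffices ∀ 𝒯 ⊆ 𝒮, ∃ g : Finset α → Finset α,
      (∀ X ∈ 𝒮, X ⊆ g X ∧ #(g X) ≤ γ ∧ (X ∈ 𝒯 → g X ∈ 𝒱)) ∧
      ∀ A ∈ 𝒮, ∀ B ∈ 𝒮, A ≠ B → g A ∩ g B = Y by
    obtain ⟨g, hg, hgY⟩ := this 𝒮 Subset.rfl
    exact ⟨g, fun X hX ↦ (hg X hX).1, fun X hX ↦ (hg X hX).2.2 hX, hgY⟩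
  intro 𝒯 h𝒯
  induction 𝒯 using Finset.induction_on with
  | empty =>
    refine ⟨id, fun X hX ↦ ⟨Subset.rfl, ?_, by simp⟩, hY⟩
    have hpos : 0 < #𝒮 := card_pos.2 ⟨X, hX⟩
    exact (hcore X hX).card_core_le (hγ.trans (Nat.le_mul_of_pos_left γ hpos)) hsize
  | insert X 𝒯 _ ih =>
    obtain ⟨hX, h𝒯⟩ := insert_subset_iff.1 h𝒯
    obtain ⟨g, hg, hgY⟩ := ih h𝒯
    obtain ⟨V, hV, hXV, hVY⟩ := exists_petal_inter_eq hγ hX (hcore X hX) hY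
      (fun A hA ↦ (hg A hA).1) (fun A hA ↦ (hg A hA).2.1) hgY
    refine ⟨Function.update g X V, fun A hA ↦ ?_, fun A hA B hB hAB ↦ ?_⟩
    · obtain rfl | hAX := eq_or_ne A X
      · simpa using ⟨hXV, hsize V hV, hV⟩
      · simpa [hAX] using hg A hA
    · obtain rfl | hAX := eq_or_ne A X
      · simpa [hAB.symm] using hVY B hB hAB.symm
      obtain rfl | hBX := eq_or_ne B X
      · simpa [hAX, inter_comm] using hVY A hA hAX
      · simpa [hAX, hBX] using hgY A hA B hB hAB

theorem IsSunflowerWithCore.lift {𝒲 : Set (Finset α)} {m : ℕ} (h : IsSunflowerWithCore 𝒲 m Y)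
    (hγ : 2 ≤ γ) (hsize : ∀ V ∈ 𝒱, #V ≤ γ) (hY : ∀ X ∈ 𝒲, Y ⊂ X)
    (hcore : ∀ X ∈ 𝒲, IsSunflowerWithCore 𝒱 (m * γ) X) :
    IsSunflowerWithCore {V ∈ 𝒱 | ∃ X ∈ 𝒲, X ⊆ V} m Y := by
  obtain ⟨𝒮, h𝒮, rfl, h𝒮Y⟩ := h
  obtain ⟨g, hsub, hg, hgY⟩ :=
    exists_extension_of_cores hγ hsize h𝒮Y fun X hX ↦ hcore X (h𝒮 hX)
  refine of_injOn (fun X hX ↦ ⟨hg X hX, X, h𝒮 hX, hsub X hX⟩) (fun A hA B hB hAB ↦ ?_) hgY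
  by_contra hne
  have hgA : g A = Y := by simpa [← hAB] using hgY A hA B hB hne
  exact (hY A (h𝒮 hA)).not_subset (hgA ▸ hsub A hA)

end Sunflower

section Gamma

open Finset
open scoped Nat

variable {α : Type} [DecidableEq α] {𝒱 : Set (Finset α)} {γ δ : ℕ}

theorem isAntichain_gammaMin : IsAntichain (· ⊆ ·) (GammaMin 𝒱 γ δ) :=
  fun A hA _ hB hAB hsub ↦ hAB (hB.2 A hA.1 hsub)

theorem two_le_mul_pow (hγ : 2 ≤ γ) (hδ : 1 ≤ δ) {n : ℕ} (hn : n ≠ 0) : 2 ≤ δ * γ ^ n :=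
  calc 2 ≤ γ := hγ
    _ ≤ γ ^ n := Nat.le_self_pow hn γ
    _ ≤ δ * γ ^ n := Nat.le_mul_of_pos_left _ hδ

theorem card_le_of_mem_gammaColl (hγ : 2 ≤ γ) (hδ : 1 ≤ δ) (hsize : ∀ V ∈ 𝒱, #V ≤ γ)
    {X : Finset α} (hX : X ∈ GammaColl 𝒱 γ δ) : #X ≤ γ :=
  hX.2.card_core_le (two_le_mul_pow hγ hδ hX.1.card_ne_zero) hsize

theorem isSunflowerWithCore_empty_of_subset_gammaMin (hγ : 2 ≤ γ) (hδ : 1 ≤ δ)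
    (hsize : ∀ V ∈ 𝒱, #V ≤ γ) {𝒲 : Set (Finset α)} (h𝒲 : 𝒲 ⊆ GammaMin 𝒱 γ δ) {Y : Finset α}
    (hY : IsSunflowerWithCore 𝒲 (δ * γ ^ γ) Y) :
    IsSunflowerWithCore {V ∈ 𝒱 | ∃ X ∈ 𝒲, X ⊆ V} δ ∅ := by
  have hr : 2 ≤ δ * γ ^ γ := two_le_mul_pow hγ hδ (by lia)
  have hY𝒲 := hY.restrict_core_ssubset hr (isAntichain_gammaMin.subset h𝒲)
  obtain ⟨X, hX, hYX⟩ := hY𝒲.nonempty (by lia)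
  have hYγ : #Y ≤ γ :=
    (card_le_card hYX.subset).trans (card_le_of_mem_gammaColl hγ hδ hsize (h𝒲 hX).1)
  have hY𝒱 : IsSunflowerWithCore {V ∈ 𝒱 | ∃ X ∈ 𝒲, X ⊆ V} (δ * γ ^ #Y) Y := by
    refine ((hY𝒲.mono_card (by gcongr; lia)).lift hγ hsize (fun _ hA ↦ hA.2) ?_).mono ?_
    · rintro A ⟨hA, hYA⟩
      refine (h𝒲 hA).1.2.mono_card ?_
      rw [mul_assoc, ← pow_succ]
      gcongr
      exacts [by lia, card_lt_card hYA]
    · rintro V ⟨hV, A, ⟨hA, -⟩, hAV⟩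
      exact ⟨hV, A, hA, hAV⟩
  obtain rfl | hne := Y.eq_empty_or_nonempty
  · simpa using hY𝒱
  · have hYΓ : Y ∈ GammaColl 𝒱 γ δ := ⟨hne, hY𝒱.mono (Set.sep_subset _ _)⟩
    exact absurd ((h𝒲 hX).2 Y hYΓ hYX.subset) hYX.ne

theorem isSunflowerWithCore_empty_of_le_card_gammaMin (hγ : 2 ≤ γ) (hδ : 1 ≤ δ)
    (hsize : ∀ V ∈ 𝒱, #V ≤ γ) {𝒲 : Finset (Finset α)} (h𝒲 : ↑𝒲 ⊆ GammaMin 𝒱 γ δ)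
    (hcard : (δ * γ ^ γ) ^ (γ + 1) * γ ! ≤ #𝒲) :
    IsSunflowerWithCore {V ∈ 𝒱 | ∃ X ∈ 𝒲, X ⊆ V} δ ∅ := by
  obtain ⟨Y, hY⟩ := exists_isSunflowerWithCore_of_le_card (two_le_mul_pow hγ hδ (by lia))
    (fun X hX ↦ card_le_of_mem_gammaColl hγ hδ hsize (h𝒲 hX).1) hcard
  exact isSunflowerWithCore_empty_of_subset_gammaMin hγ hδ hsize h𝒲 hY

end Gamma

section Witnesses

variable {α : Type} {G : SimpleGraph α} {V W : Finset α}

theorem closedNbhd_mono (h : V ⊆ W) : closedNbhd G V ⊆ closedNbhd G W :=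
  Set.union_subset_union (Finset.coe_subset.2 h) fun _ ⟨x, hx, hux⟩ ↦ ⟨x, h hx, hux⟩

theorem Witnesses.mono {σ : LinearOrder α} {t : ℕ} {v : α} (hV : Witnesses G σ t v V)
    (h : V ⊆ W) : Witnesses G σ t v W :=
  let ⟨u, hu, hvu⟩ := hV
  ⟨u, closedNbhd_mono h hu, hvu⟩

end Witnesses

theorem stmt12_general {α : Type} [DecidableEq α]
    (G : SimpleGraph α) (σ : LinearOrder α) (t γ δ : ℕ) (hγ : 2 ≤ γ) (hδ : 1 ≤ δ)
    (𝒱 : Set (Finset α)) (hsize : ∀ V ∈ 𝒱, V.card ≤ γ) (v : α)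
    (hwit : ∃ 𝒲 : Finset (Finset α), ↑𝒲 ⊆ GammaMin 𝒱 γ δ ∧
      (δ * γ ^ γ) ^ (γ + 1) * Nat.factorial γ ≤ 𝒲.card ∧
      ∀ X ∈ 𝒲, Witnesses G σ t v X) :
    ∃ 𝒟 : Finset (Finset α), ↑𝒟 ⊆ 𝒱 ∧ δ ≤ 𝒟.card ∧
      (∀ A ∈ 𝒟, ∀ B ∈ 𝒟, A ≠ B → Disjoint A B) ∧
      ∀ V ∈ 𝒟, Witnesses G σ t v V := by
  obtain ⟨𝒲, h𝒲, hcard, hv⟩ := hwit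
  obtain ⟨𝒟, h𝒟, h𝒟card, hdisj⟩ :=
    isSunflowerWithCore_empty_of_le_card_gammaMin hγ hδ hsize h𝒲 hcard
  refine ⟨𝒟, fun V hV ↦ (h𝒟 hV).1, h𝒟card.ge, fun A hA B hB hAB ↦ ?_, fun V hV ↦ ?_⟩
  · exact Finset.disjoint_iff_inter_eq_empty.2 (hdisj A hA B hB hAB)
  · obtain ⟨-, X, hX, hXV⟩ := h𝒟 hV
    exact (hv X hX).mono hXV

/-- let `𝒱` consist of subsets of `V(G)` of size at most `γ` inducing
connected subgraphs, with `γ ≥ 2` and `δ ≥ 1`.  If a vertex `v` `γ`-witnesses at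
least `(δ·γ^γ)^{γ+1}·γ!` members of `Γ*`, then `v` `γ`-witnesses `δ` pairwise
disjoint members of `𝒱`. -/
theorem stmt12 {α : Type} [Fintype α] [DecidableEq α]
    (G : SimpleGraph α) (σ : LinearOrder α) (γ δ : ℕ) (hγ : 2 ≤ γ) (hδ : 1 ≤ δ)
    (𝒱 : Set (Finset α))
    (hsize : ∀ V ∈ 𝒱, V.card ≤ γ)
    (hconn : ∀ V ∈ 𝒱, (G.induce (↑V : Set α)).Connected)
    (v : α)
    (hwit : ∃ 𝒲 : Finset (Finset α), ↑𝒲 ⊆ GammaMin 𝒱 γ δ ∧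
      (δ * γ ^ γ) ^ (γ + 1) * Nat.factorial γ ≤ 𝒲.card ∧
      ∀ X ∈ 𝒲, Witnesses G σ γ v X) :
    ∃ 𝒟 : Finset (Finset α), ↑𝒟 ⊆ 𝒱 ∧ δ ≤ 𝒟.card ∧
      (∀ A ∈ 𝒟, ∀ B ∈ 𝒟, A ≠ B → Disjoint A B) ∧
      ∀ V ∈ 𝒟, Witnesses G σ γ v V := by
  exact stmt12_general G σ γ γ δ hγ hδ 𝒱 hsize v hwit
end
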